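/- For every real M > 0 and every ε > 0, there exists N ∈ ℕ such that for all n ≥ N, ∑_{k=1}^{n²} (M/n²)^k · (C(n², k) − S_{n,k}) ≤ ε. In other words, the total weighted contribution of k-block configurations containing at least two blocks at the same height, where each configuration of k blocks carries weight (M/n²)^k, tends to 0 as n → ∞. (This is the quantitative estimate proving that the full surface-ordered product triv_n and its reduction triv_n^red, obtained by removing all terms in which the 2-form B occurs at least twice at the same height, satisfy ‖triv_n − triv_n^red‖ ≤ ε for all sufficiently large n.) -/

import Mathlib

/-!
With `x = M / n²` and `l_i` the number of blocks at height `i`, both parts of the sum are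
generating functions: `∑ C(n², k) x^k = (1 + x)^(n²)`, and `∑ S_{n,k} x^k = ∏ (1 + x l_i)`, because
a configuration with no two blocks at the same height chooses at most one block at each height.
The `k = 0` terms are both `1` and cancel.

The first is at most `exp M`. For the second, `1 + y ≥ exp (y - y²)` for `y ≥ 0`; since
`∑ l_i = n²` and `l_i ≤ n`, we have `∑ l_i² ≤ n³`, so the product is at least
`exp (M - M² / n) ≥ exp M * (1 - M² / n)`. The sum is therefore at most `exp M * M² / n`, which
tends to `0`.
-/

/-- `l n i` is the number of blocks at height `i` in an `n × n` grid tilted by 45°: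
`l n i = i` for `1 ≤ i ≤ n` and `l n i = 2n - i` for `n < i ≤ 2n - 1`. -/
def tiltedHeight (n i : ℕ) : ℕ := if i ≤ n then i else 2 * n - i

/-- `S n k` is the number of configurations of `k` blocks in the tilted `n × n` grid with
no two blocks at the same height. -/
def sameHeightFree (n k : ℕ) : ℕ :=
  ∑ s ∈ (Finset.Icc 1 (2 * n - 1)).powersetCard k, ∏ i ∈ s, tiltedHeight n i

lemma tiltedHeight_le (n i : ℕ) : tiltedHeight n i ≤ n := by
  unfold tiltedHeight
  split_ifs <;> omega

/-- The grid has `n²` blocks in total: the row at height `i < n` pairs with the row at height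
`n + i`, and together they have `n` blocks. -/
lemma sum_tiltedHeight (n : ℕ) (hn : 1 ≤ n) :
    ∑ i ∈ Finset.Icc 1 (2 * n - 1), tiltedHeight n i = n ^ 2 := by
  have h1 : ∑ i ∈ Finset.Icc 1 (2 * n - 1), tiltedHeight n i
      = ∑ i ∈ Finset.range (n + n), tiltedHeight n i := by
    refine Finset.sum_subset (fun i hi => ?_) (fun i hi hi' => ?_)
    · simp only [Finset.mem_Icc, Finset.mem_range] at *
      omega
    · have : i = 0 := by
        simp only [Finset.mem_Icc, Finset.mem_range] at *
        omega
      simp [this, tiltedHeight]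
  rw [h1, Finset.sum_range_add, ← Finset.sum_add_distrib,
    Finset.sum_congr rfl (g := fun _ => n)]
  · simp [sq]
  · intro i hi
    rw [Finset.mem_range] at hi
    unfold tiltedHeight
    split_ifs <;> omega

/-- The generating function of `sameHeightFree n` is `∏ (1 + x l_i)`; only the inequality needed
below is stated, so that the vanishing terms `k > 2n - 1` can be kept. -/
lemma prod_le_sum_sameHeightFree (n : ℕ) (hn : 1 ≤ n) (x : ℝ) (hx : 0 ≤ x) :
    ∏ i ∈ Finset.Icc 1 (2 * n - 1), (1 + x * (tiltedHeight n i : ℝ))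
      ≤ ∑ k ∈ Finset.range (n ^ 2 + 1), x ^ k * (sameHeightFree n k : ℝ) := by
  have hcard : (Finset.Icc 1 (2 * n - 1)).card + 1 ≤ n ^ 2 + 1 := by
    have h : 2 * n ≤ n ^ 2 + 1 := by nlinarith [sq_nonneg ((n : ℤ) - 1)]
    rw [Nat.card_Icc]
    omega
  rw [Finset.prod_one_add, Finset.sum_powerset]
  calc _ = ∑ k ∈ Finset.range ((Finset.Icc 1 (2 * n - 1)).card + 1),
        x ^ k * (sameHeightFree n k : ℝ) := by
        refine Finset.sum_congr rfl fun k _ => ?_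
        unfold sameHeightFree
        push_cast
        rw [Finset.mul_sum]
        refine Finset.sum_congr rfl fun s hs => ?_
        rw [Finset.prod_mul_distrib, Finset.prod_const, (Finset.mem_powersetCard.mp hs).2]
    _ ≤ _ := Finset.sum_le_sum_of_subset_of_nonneg (Finset.range_mono hcard)
        fun k _ _ => by positivity

lemma exp_sub_sq_le (y : ℝ) (hy : 0 ≤ y) : Real.exp (y - y ^ 2) ≤ 1 + y := by
  have hpos : 0 < 1 + y := by linarith
  -- `exp (-t) ≥ 1 - t` at `t = y / (1 + y)`, where `1 - t = 1 / (1 + y)`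
  have h1 : (1 + y)⁻¹ ≤ Real.exp (-(y / (1 + y))) := by
    have h := Real.add_one_le_exp (-(y / (1 + y)))
    have h' : -(y / (1 + y)) + 1 = (1 + y)⁻¹ := by field_simp; ring
    rwa [h'] at h
  have h2 : Real.exp (y / (1 + y)) ≤ 1 + y := by
    rw [Real.exp_neg] at h1
    exact (inv_le_inv₀ hpos (Real.exp_pos _)).mp h1
  refine (Real.exp_le_exp.mpr ?_).trans h2
  rw [le_div_iff₀ hpos]
  nlinarith [pow_nonneg hy 3]

/-- At `x = M / n²` the product `∏ (1 + x l_i)` is within `exp M * M² / n` of `exp M`. -/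
lemma le_prod_tiltedHeight (n : ℕ) (hn : 1 ≤ n) (M : ℝ) (hM : 0 < M) :
    Real.exp M * (1 - M ^ 2 / n) ≤
      ∏ i ∈ Finset.Icc 1 (2 * n - 1), (1 + M / (n ^ 2 : ℝ) * (tiltedHeight n i : ℝ)) := by
  have hn0 : (0 : ℝ) < n := by exact_mod_cast hn
  have hsum : ∑ i ∈ Finset.Icc 1 (2 * n - 1), (tiltedHeight n i : ℝ) = (n : ℝ) ^ 2 := by
    exact_mod_cast sum_tiltedHeight n hn
  set x : ℝ := M / (n ^ 2 : ℝ) with hx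
  have hx0 : 0 ≤ x := by positivity
  have hlin : M - M ^ 2 / n = ∑ i ∈ Finset.Icc 1 (2 * n - 1),
      (x * (tiltedHeight n i : ℝ) - x ^ 2 * n * (tiltedHeight n i : ℝ)) := by
    rw [Finset.sum_sub_distrib, ← Finset.mul_sum, ← Finset.mul_sum, hsum, hx]
    field_simp
  calc Real.exp M * (1 - M ^ 2 / n) ≤ Real.exp M * Real.exp (-(M ^ 2 / n)) := by
        gcongr
        exact Real.one_sub_le_exp_neg _
    _ = ∏ i ∈ Finset.Icc 1 (2 * n - 1),
        Real.exp (x * (tiltedHeight n i : ℝ) - x ^ 2 * n * (tiltedHeight n i : ℝ)) := by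
        rw [← Real.exp_add, ← sub_eq_add_neg, hlin, Real.exp_sum]
    _ ≤ _ := by
        refine Finset.prod_le_prod (fun _ _ => (Real.exp_pos _).le) fun i _ => ?_
        refine le_trans (Real.exp_le_exp.mpr ?_) (exp_sub_sq_le _ (by positivity))
        have hl : (tiltedHeight n i : ℝ) ≤ n := by exact_mod_cast tiltedHeight_le n i
        have : x ^ 2 * ((tiltedHeight n i : ℝ) * tiltedHeight n i)
            ≤ x ^ 2 * (n * (tiltedHeight n i : ℝ)) := by gcongr
        linarith

/-- For every real `M > 0` and every `ε > 0`, there exists `N` such that for all `n ≥ N`,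
`∑_{k=1}^{n²} (M/n²)^k (C(n²,k) - S_{n,k}) ≤ ε`: the total weighted contribution of
configurations containing at least two blocks at the same height tends to `0`. -/
theorem weighted_sameHeight_contribution_small (M : ℝ) (hM : 0 < M) (ε : ℝ) (hε : 0 < ε) :
    ∃ N : ℕ, ∀ n, N ≤ n →
      ∑ k ∈ Finset.Icc 1 (n ^ 2),
        (M / (n ^ 2 : ℝ)) ^ k * (((n ^ 2).choose k : ℝ) - (sameHeightFree n k : ℝ)) ≤ ε := by
  obtain ⟨N, hN⟩ := exists_nat_ge (Real.exp M * M ^ 2 / ε)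
  refine ⟨max N 1, fun n hn => ?_⟩
  have hn1 : 1 ≤ n := (le_max_right _ _).trans hn
  have hn0 : (0 : ℝ) < n := by exact_mod_cast hn1
  have hNn : Real.exp M * M ^ 2 / ε ≤ n :=
    hN.trans (by exact_mod_cast (le_max_left _ _).trans hn)
  have hx0 : 0 ≤ M / (n ^ 2 : ℝ) := by positivity
  have hlow := (le_prod_tiltedHeight n hn1 M hM).trans
    (prod_le_sum_sameHeightFree n hn1 _ hx0)
  set x : ℝ := M / (n ^ 2 : ℝ) with hx
  have hup : ∑ k ∈ Finset.range (n ^ 2 + 1), x ^ k * ((n ^ 2).choose k : ℝ) ≤ Real.exp M := by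
    have hbin : ∑ k ∈ Finset.range (n ^ 2 + 1), x ^ k * ((n ^ 2).choose k : ℝ)
        = (x + 1) ^ (n ^ 2) := by
      simp [add_pow]
    have hMx : M = ((n ^ 2 : ℕ) : ℝ) * x := by
      rw [hx]
      push_cast
      field_simp
    rw [hbin, hMx, Real.exp_nat_mul]
    exact pow_le_pow_left₀ (by positivity) (Real.add_one_le_exp x) _
  have hzero : ∑ k ∈ Finset.Icc 1 (n ^ 2),
        x ^ k * (((n ^ 2).choose k : ℝ) - (sameHeightFree n k : ℝ))
      = ∑ k ∈ Finset.range (n ^ 2 + 1),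
        x ^ k * (((n ^ 2).choose k : ℝ) - (sameHeightFree n k : ℝ)) := by
    refine Finset.sum_subset (fun k hk => ?_) (fun k hk hk' => ?_)
    · simp only [Finset.mem_Icc, Finset.mem_range] at *
      omega
    · have : k = 0 := by
        simp only [Finset.mem_Icc, Finset.mem_range] at *
        omega
      simp [this, sameHeightFree]
  have herr : Real.exp M * (M ^ 2 / n) ≤ ε := by
    rw [div_le_iff₀ hε] at hNn
    rw [← mul_div_assoc, div_le_iff₀ hn0]
    linarith
  rw [hzero]
  simp only [mul_sub, Finset.sum_sub_distrib] at hlow ⊢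
  linarith
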